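/- If T is typable, Tσ ∈ 𝒟, and σ → σ' (i.e., xσ → xσ' for exactly one variable x and yσ = yσ' for all y ≠ x), then ⟦T⟧σ = ⟦T⟧σ' (the interpretation of types is invariant by reduction of the substitution). -/

import Mathlib

set_option maxHeartbeats 1000000

/-! # Terms of λΠ/R (de Bruijn representation) -/

inductive Trm (F : Type) : Type
  | type : Trm F
  | kind : Trm F
  | var : ℕ → Trm F
  | sym : F → Trm F
  | pi : Trm F → Trm F → Trm F
  | app : Trm F → Trm F → Trm F
  | lam : Trm F → Trm F → Trm F

namespace Trm

variable {F : Type}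

/-- Lifting of a renaming under a binder. -/
def upRen (ρ : ℕ → ℕ) : ℕ → ℕ
  | 0 => 0
  | n + 1 => ρ n + 1

/-- Renaming of (de Bruijn) variables. -/
def rename (ρ : ℕ → ℕ) : Trm F → Trm F
  | .type => .type
  | .kind => .kind
  | .var n => .var (ρ n)
  | .sym f => .sym f
  | .pi A B => .pi (rename ρ A) (rename (upRen ρ) B)
  | .app t u => .app (rename ρ t) (rename ρ u)
  | .lam A b => .lam (rename ρ A) (rename (upRen ρ) b)

/-- Lifting of a substitution under a binder. -/
def up (σ : ℕ → Trm F) : ℕ → Trm F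
  | 0 => .var 0
  | n + 1 => rename Nat.succ (σ n)

/-- Capture-avoiding (parallel) substitution. -/
def subst (σ : ℕ → Trm F) : Trm F → Trm F
  | .type => .type
  | .kind => .kind
  | .var n => σ n
  | .sym f => .sym f
  | .pi A B => .pi (subst σ A) (subst (up σ) B)
  | .app t u => .app (subst σ t) (subst σ u)
  | .lam A b => .lam (subst σ A) (subst (up σ) b)

/-- Cons of a term on a substitution: `scons a σ` maps `0` to `a` and `n+1` to `σ n`. -/
def scons (a : Trm F) (σ : ℕ → Trm F) : ℕ → Trm F
  | 0 => a
  | n + 1 => σ n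

/-- Substitution of the first free variable: `t[x ↦ a]`. -/
def subst1 (a t : Trm F) : Trm F := subst (scons a .var) t

/-- Shifting of all free variables. -/
def shift : Trm F → Trm F := rename Nat.succ

/-- Application of a head term to a list of arguments: `appList h [t1,…,tn] = h t1 … tn`. -/
def appList (h : Trm F) : List (Trm F) → Trm F
  | [] => h
  | a :: as => appList (.app h a) as

/-- Free (de Bruijn) variables of a term. -/
def FV : Trm F → Set ℕ
  | .type => ∅
  | .kind => ∅
  | .var n => {n}
  | .sym _ => ∅
  | .pi A B => FV A ∪ {n | n + 1 ∈ FV B}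
  | .app t u => FV t ∪ FV u
  | .lam A b => FV A ∪ {n | n + 1 ∈ FV b}

/-- The class 𝕂 of kinds: `K = TYPE | Πx:t.K`. -/
def IsKind : Trm F → Prop
  | .type => True
  | .pi _ B => IsKind B
  | _ => False

/-- Sorts: `TYPE` and `KIND`. -/
def IsSort (s : Trm F) : Prop := s = .type ∨ s = .kind

/-- The product arity of a term: the number of leading products. -/
def piArity : Trm F → ℕ
  | .pi _ B => piArity B + 1
  | _ => 0

/-- Strip `n` leading products. -/
def piCodN : ℕ → Trm F → Trm F
  | 0, T => T
  | n + 1, .pi _ B => piCodN n B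
  | _ + 1, T => T

/-- The first `n` domains of the leading products, as a de Bruijn context
(type of variable `0` first, i.e. innermost first). -/
def teleN : ℕ → Trm F → List (Trm F)
  | 0, _ => []
  | n + 1, .pi A B => teleN n B ++ [A]
  | _ + 1, _ => []

/-- The full telescope of leading products, as a de Bruijn context. -/
def telescope (T : Trm F) : List (Trm F) := teleN (piArity T) T

/-- The domains of the leading products, outermost first. -/
def piDoms : Trm F → List (Trm F)
  | .pi A B => A :: piDoms B
  | _ => []

end Trm

/-- The subterm relation (reflexive and transitive). -/
inductive Subterm {F : Type} : Trm F → Trm F → Prop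
  | refl (t : Trm F) : Subterm t t
  | piL {t A B} : Subterm t A → Subterm t (.pi A B)
  | piR {t A B} : Subterm t B → Subterm t (.pi A B)
  | appL {t u v} : Subterm t u → Subterm t (.app u v)
  | appR {t u v} : Subterm t v → Subterm t (.app u v)
  | lamL {t A b} : Subterm t A → Subterm t (.lam A b)
  | lamR {t A b} : Subterm t b → Subterm t (.lam A b)

/-! # Rewriting -/

/-- A set of rewriting rules `l → r`. -/
abbrev Rules (F : Type) := Set (Trm F × Trm F)

/-- `R` is a rewriting system: for every rule `l → r`, `FV(r) ⊆ FV(l)` and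
`l` is of the form `f l⃗`. -/
def IsRewriteSystem {F : Type} (R : Rules F) : Prop :=
  ∀ p ∈ R, Trm.FV p.2 ⊆ Trm.FV p.1 ∧ ∃ (f : F) (ls : List (Trm F)), p.1 = Trm.appList (.sym f) ls

/-- A symbol is defined if it heads the left-hand side of some rule. -/
def Defined {F : Type} (R : Rules F) (f : F) : Prop :=
  ∃ (ls : List (Trm F)) (r : Trm F), (Trm.appList (.sym f) ls, r) ∈ R

/-- One-step reduction `→ = →β ∪ →R`: β-reduction together with the closure of the
rules of `R` by substitution and context. -/
inductive Red {F : Type} (R : Rules F) : Trm F → Trm F → Prop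
  | beta (A b a : Trm F) : Red R (.app (.lam A b) a) (Trm.subst1 a b)
  | rule {l r : Trm F} (σ : ℕ → Trm F) : (l, r) ∈ R → Red R (Trm.subst σ l) (Trm.subst σ r)
  | appL {t t' u} : Red R t t' → Red R (.app t u) (.app t' u)
  | appR {t u u'} : Red R u u' → Red R (.app t u) (.app t u')
  | piL {A A' B} : Red R A A' → Red R (.pi A B) (.pi A' B)
  | piR {A B B'} : Red R B B' → Red R (.pi A B) (.pi A B')
  | lamL {A A' b} : Red R A A' → Red R (.lam A b) (.lam A' b)
  | lamR {A b b'} : Red R b b' → Red R (.lam A b) (.lam A b')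

/-- Multi-step reduction `→*`. -/
def RedStar {F : Type} (R : Rules F) : Trm F → Trm F → Prop := Relation.ReflTransGen (Red R)

/-- Joinability `↓`. -/
def Joinable {F : Type} (R : Rules F) (t u : Trm F) : Prop :=
  ∃ v, RedStar R t v ∧ RedStar R u v

/-- Local confluence: `← · → ⊆ →* · *←`. -/
def LocallyConfluent {F : Type} (R : Rules F) : Prop :=
  ∀ t u v, Red R t u → Red R t v → Joinable R u v

/-- `t` is strongly normalizing (terminating): no infinite reduction sequence from `t`. -/
def SN {F : Type} (R : Rules F) (t : Trm F) : Prop := Acc (fun a b => Red R b a) t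

/-- The set of strongly normalizing terms. -/
def SNset {F : Type} (R : Rules F) : Set (Trm F) := {t | SN R t}

/-- `t` is in normal form. -/
def NormalForm {F : Type} (R : Rules F) (t : Trm F) : Prop := ∀ u, ¬ Red R t u

/-- Neutral terms: `(λx:A.t)u v⃗`, `x v⃗`, or `f v⃗` where every rule `f l⃗ → r ∈ R`
satisfies `|l⃗| ≤ |v⃗|`. -/
def Neutral {F : Type} (R : Rules F) (t : Trm F) : Prop :=
  (∃ (A b a : Trm F) (vs : List (Trm F)), t = Trm.appList (.app (.lam A b) a) vs) ∨
  (∃ (x : ℕ) (vs : List (Trm F)), t = Trm.appList (.var x) vs) ∨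
  (∃ (f : F) (vs : List (Trm F)), t = Trm.appList (.sym f) vs ∧
    ∀ (ls : List (Trm F)) (r : Trm F), (Trm.appList (.sym f) ls, r) ∈ R → ls.length ≤ vs.length)

/-- Computability predicates: `S ⊆ SN`, `S` is closed under reduction, and `S` contains
every neutral term all of whose one-step reducts are in `S`. -/
def IsCompPred {F : Type} (R : Rules F) (S : Set (Trm F)) : Prop :=
  S ⊆ SNset R ∧ (∀ t ∈ S, ∀ u, Red R t u → u ∈ S) ∧
  (∀ t, Neutral R t → (∀ u, Red R t u → u ∈ S) → t ∈ S)

/-! # Typing: λP extended with function symbols and conversion modulo `→` -/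

/-- The typing rules of λΠ/R: the rules of λP (in de Bruijn presentation) with the extra
rule (fun) `⊢ f : Θ_f` and conversion up to joinability for `→`. -/
inductive Typing {F : Type} (R : Rules F) (Θ sΘ : F → Trm F) :
    List (Trm F) → Trm F → Trm F → Prop
  | ax : Typing R Θ sΘ [] .type .kind
  | var {Γ A s} : Trm.IsSort s → Typing R Θ sΘ Γ A s →
      Typing R Θ sΘ (A :: Γ) (.var 0) (Trm.shift A)
  | weak {Γ A s b B} : Trm.IsSort s → Typing R Θ sΘ Γ A s → Typing R Θ sΘ Γ b B →
      Typing R Θ sΘ (A :: Γ) (Trm.shift b) (Trm.shift B)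
  | prod {Γ A B s} : Trm.IsSort s → Typing R Θ sΘ Γ A .type → Typing R Θ sΘ (A :: Γ) B s →
      Typing R Θ sΘ Γ (.pi A B) s
  | abs {Γ A b B s} : Trm.IsSort s → Typing R Θ sΘ (A :: Γ) b B →
      Typing R Θ sΘ Γ (.pi A B) s → Typing R Θ sΘ Γ (.lam A b) (.pi A B)
  | app {Γ t a A B} : Typing R Θ sΘ Γ t (.pi A B) → Typing R Θ sΘ Γ a A →
      Typing R Θ sΘ Γ (.app t a) (Trm.subst1 a B)
  | conv {Γ a A B s} : Typing R Θ sΘ Γ a A → Joinable R A B → Typing R Θ sΘ Γ B s →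
      Trm.IsSort s → Typing R Θ sΘ Γ a B
  | symb (f : F) : Trm.IsSort (sΘ f) → Typing R Θ sΘ [] (Θ f) (sΘ f) →
      Typing R Θ sΘ [] (.sym f) (Θ f)

/-- `→` preserves typing (subject reduction). -/
def PresTyping {F : Type} (R : Rules F) (Θ sΘ : F → Trm F) : Prop :=
  ∀ Γ t u T, Typing R Θ sΘ Γ t T → Red R t u → Typing R Θ sΘ Γ u T

/-- A substitution `γ` is well-typed from `Δ` to `Γ` (for a generic typing judgment `Ty`):
for all `(x : T) ∈ Δ`, `Ty Γ (xγ) (Tγ)`. -/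
def SubstTyped {F : Type} (Ty : List (Trm F) → Trm F → Trm F → Prop)
    (Γ : List (Trm F)) (γ : ℕ → Trm F) (Δ : List (Trm F)) : Prop :=
  ∀ i A, Δ[i]? = some A → Ty Γ (γ i) (Trm.subst (fun j => γ (j + i + 1)) A)

/-! # Interpretation of types as computability predicates -/

/-- `𝕀`: partial functions from terms to sets of terms. -/
abbrev Interp (F : Type) := Trm F → Part (Set (Trm F))

/-- Graph inclusion of partial functions. -/
def InterpLE {F : Type} (I J : Interp F) : Prop := ∀ T S, S ∈ I T → S ∈ J T

/-- `I` is the least fixpoint of `φ` on `𝕀` (ordered by graph inclusion). -/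
def IsLfpInterp {F : Type} (φ : Interp F → Interp F) (I : Interp F) : Prop :=
  φ I = I ∧ ∀ J, φ J = J → InterpLE I J

/-- The domain `D(I)`: terminating terms `T` such that whenever `T →* Πx:A.B`,
`A ∈ dom(I)` and `B[x↦a] ∈ dom(I)` for all `a ∈ I(A)`. -/
def domD {F : Type} (R : Rules F) (I : Interp F) : Set (Trm F) :=
  {T | SN R T ∧ ∀ A B, RedStar R T (.pi A B) →
    (I A).Dom ∧ ∀ S ∈ I A, ∀ a ∈ S, (I (Trm.subst1 a B)).Dom}

/-- `{t | ∀ a ∈ I(A), t a ∈ I(B[x↦a])}` (relational reading of the partial function `I`). -/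
def piPart {F : Type} (I : Interp F) (A B : Trm F) : Set (Trm F) :=
  {t | ∀ S ∈ I A, ∀ a ∈ S, ∀ S' ∈ I (Trm.subst1 a B), Trm.app t a ∈ S'}

open Classical in
/-- The monotone function `F : 𝕀 → 𝕀`: `dom(F(I)) = D(I)`; `F(I)(T) = SN` if the normal
form of `T` is not a product; `F(I)(T) = {t | ∀ a ∈ I(A), t a ∈ I(B[x↦a])}` if the normal
form of `T` is `Πx:A.B`. -/
noncomputable def interpF {F : Type} (R : Rules F) (I : Interp F) : Interp F := fun T =>
  ⟨T ∈ domD R I, fun _ =>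
    if h : ∃ A B, RedStar R T (.pi A B) ∧ NormalForm R (.pi A B) then
      piPart I h.choose h.choose_spec.choose
    else SNset R⟩

/-- The value of a partial interpretation at `T` (as a set). -/
def partMem {F : Type} (I : Interp F) (T : Trm F) : Set (Trm F) := {t | ∀ S ∈ I T, t ∈ S}

open Classical in
/-- The interpretation `⟦T⟧σ` of a term `T` wrt a substitution `σ`, relative to the least
fixpoint `I = ℐ` of `interpF`: `⟦s⟧σ = 𝒟` for `s` a sort;
`⟦Πx:A.K⟧σ = {t | ∀ a ∈ ⟦A⟧σ, t a ∈ ⟦K⟧[x↦a,σ]}` for `K` a kind;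
`⟦T⟧σ = ℐ(Tσ)` if `T` is neither a kind nor `KIND` and `Tσ ∈ 𝒟`; `⟦T⟧σ = SN` otherwise. -/
noncomputable def interp {F : Type} (R : Rules F) (I : Interp F) :
    Trm F → (ℕ → Trm F) → Set (Trm F)
  | .type, _ => domD R I
  | .kind, _ => domD R I
  | .pi A B, σ =>
      if Trm.IsKind B then
        {t | ∀ a ∈ interp R I A σ, Trm.app t a ∈ interp R I B (Trm.scons a σ)}
      else if Trm.subst σ (.pi A B) ∈ domD R I then partMem I (Trm.subst σ (.pi A B))
      else SNset R
  | .var n, σ =>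
      if Trm.subst σ (.var n) ∈ domD R I then partMem I (Trm.subst σ (.var n)) else SNset R
  | .sym g, σ =>
      if Trm.subst σ (.sym g) ∈ domD R I then partMem I (Trm.subst σ (.sym g)) else SNset R
  | .app t u, σ =>
      if Trm.subst σ (.app t u) ∈ domD R I then partMem I (Trm.subst σ (.app t u)) else SNset R
  | .lam A b, σ =>
      if Trm.subst σ (.lam A b) ∈ domD R I then partMem I (Trm.subst σ (.lam A b)) else SNset R

/-- `σ ⊨ Γ`: a substitution is adequate wrt an environment. -/
def Models {F : Type} (R : Rules F) (I : Interp F) (σ : ℕ → Trm F) (Γ : List (Trm F)) : Prop :=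
  ∀ i A, Γ[i]? = some A → σ i ∈ interp R I A (fun j => σ (j + i + 1))

/-- The typing map `Θ` is adequate: `f ∈ ⟦Θ_f⟧` whenever `⊢ Θ_f : s_f` and `Θ_f ∈ ⟦s_f⟧`. -/
def Adequate {F : Type} (R : Rules F) (Θ sΘ : F → Trm F) (I : Interp F) : Prop :=
  ∀ f : F, Typing R Θ sΘ [] (Θ f) (sΘ f) → Θ f ∈ interp R I (sΘ f) Trm.var →
    Trm.sym f ∈ interp R I (Θ f) Trm.var

/-- The substitution `[x⃗ ↦ l⃗]` (where `ls` lists the images of variables `0, 1, …`). -/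
def mkSubst {F : Type} (ls : List (Trm F)) : ℕ → Trm F := fun i =>
  (ls[i]?).getD (.var (i - ls.length))

/-- Composition of substitutions: `x ↦ (xγ)σ`. -/
def compSubst {F : Type} (γ σ : ℕ → Trm F) : ℕ → Trm F := fun i => Trm.subst σ (γ i)

/-- The set `ℂ` of terms `f t⃗` with `|t⃗| = arit(Θ_f)`, `⊢ Θ_f : s_f`, `Θ_f ∈ ⟦s_f⟧` and
`[x⃗↦t⃗] ⊨ Γ_f`. -/
def CC {F : Type} (R : Rules F) (Θ sΘ : F → Trm F) (I : Interp F) : Set (Trm F) :=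
  {t | ∃ (f : F) (ts : List (Trm F)), t = Trm.appList (.sym f) ts ∧
    ts.length = Trm.piArity (Θ f) ∧
    Typing R Θ sΘ [] (Θ f) (sΘ f) ∧ Θ f ∈ interp R I (sΘ f) Trm.var ∧
    Models R I (mkSubst ts.reverse) (Trm.telescope (Θ f))}

/-! # Dependency pairs -/

/-- Occurrences of `p` in a term, not at the root, such that `p` is not further applied
(i.e. `p` collects all the arguments of its head at this occurrence). -/
inductive MaxOccNR {F : Type} (p : Trm F) : Trm F → Prop
  | appL {u v} : MaxOccNR p u → MaxOccNR p (.app u v)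
  | appR {u v} : MaxOccNR p v → MaxOccNR p (.app u v)
  | appRroot {u} : MaxOccNR p (.app u p)
  | piL {A B} : MaxOccNR p A → MaxOccNR p (.pi A B)
  | piLroot {B} : MaxOccNR p (.pi p B)
  | piR {A B} : MaxOccNR p B → MaxOccNR p (.pi A B)
  | piRroot {A} : MaxOccNR p (.pi A p)
  | lamL {A b} : MaxOccNR p A → MaxOccNR p (.lam A b)
  | lamLroot {b} : MaxOccNR p (.lam p b)
  | lamR {A b} : MaxOccNR p b → MaxOccNR p (.lam A b)
  | lamRroot {A} : MaxOccNR p (.lam A p)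

/-- `p` occurs in `t` as a maximal application. -/
def MaxOcc {F : Type} (p t : Trm F) : Prop := t = p ∨ MaxOccNR p t

/-- Dependency pairs: `f l⃗ > g m⃗` iff there is a rule `f l⃗ → r ∈ R`, `g` is defined and
`g m⃗` is a subterm of `r` such that `m⃗` are all the arguments to which `g` is applied. -/
def DepPair {F : Type} (R : Rules F) (f : F) (ls : List (Trm F)) (g : F)
    (ms : List (Trm F)) : Prop :=
  Defined R g ∧ ∃ r, (Trm.appList (.sym f) ls, r) ∈ R ∧ MaxOcc (Trm.appList (.sym g) ms) r

/-- `f t⃗ →arg f u⃗`: reduction of exactly one argument. -/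
def ArgRed {F : Type} (R : Rules F) (t u : Trm F) : Prop :=
  ∃ (f : F) (pre post : List (Trm F)) (a b : Trm F), Red R a b ∧
    t = Trm.appList (.sym f) (pre ++ a :: post) ∧ u = Trm.appList (.sym f) (pre ++ b :: post)

/-- `>ₛ`: the closure of the dependency pair relation by substitution and left-application:
`f t₁…t_p >ₛ g u₁…u_q` iff there are a dependency pair `f l₁…l_i > g m₁…m_j` with `i ≤ p`
and `j ≤ q` and a substitution `σ` such that `t_k →* l_kσ` for `k ≤ i` and `m_kσ = u_k`
for `k ≤ j`. -/
def GTsub {F : Type} (R : Rules F) (t u : Trm F) : Prop :=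
  ∃ (f g : F) (ts us ls ms : List (Trm F)) (σ : ℕ → Trm F),
    t = Trm.appList (.sym f) ts ∧ u = Trm.appList (.sym g) us ∧
    DepPair R f ls g ms ∧ ls.length ≤ ts.length ∧ ms.length ≤ us.length ∧
    (∀ (k : ℕ) (tk lk : Trm F), ts[k]? = some tk → ls[k]? = some lk → RedStar R tk (Trm.subst σ lk)) ∧
    (∀ (k : ℕ) (mk : Trm F), ms[k]? = some mk → us[k]? = some (Trm.subst σ mk))

/-- The call relation `≻̃ = →arg* · >ₛ` on `ℂ`. -/
def CallRel {F : Type} (R : Rules F) (Θ sΘ : F → Trm F) (I : Interp F) (t u : Trm F) : Prop :=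
  t ∈ CC R Θ sΘ I ∧ u ∈ CC R Θ sΘ I ∧
    ∃ v, Relation.ReflTransGen (ArgRed R) t v ∧ GTsub R v u

/-! # Precedence and well-structured systems -/

/-- `f ⪰ g` (one step): `g` occurs in `Θ_f` or in the right-hand side of a rule of `f`. -/
def PrecBase {F : Type} (R : Rules F) (Θ : F → Trm F) (f g : F) : Prop :=
  Subterm (.sym g) (Θ f) ∨
  ∃ (ls : List (Trm F)) (r : Trm F), (Trm.appList (.sym f) ls, r) ∈ R ∧ Subterm (.sym g) r

/-- `⪰`: the smallest quasi-order containing `PrecBase`. -/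
def Preceq {F : Type} (R : Rules F) (Θ : F → Trm F) : F → F → Prop :=
  Relation.ReflTransGen (PrecBase R Θ)

/-- `≻`: the strict part of `⪰`. -/
def Prec {F : Type} (R : Rules F) (Θ : F → Trm F) (f g : F) : Prop :=
  Preceq R Θ f g ∧ ¬ Preceq R Θ g f

/-- The restricted type system `⊢_{≺ f}`: as `Typing`, but function symbols may only be
introduced when strictly smaller than `f` in the precedence. -/
inductive LTyp {F : Type} (R : Rules F) (Θ sΘ : F → Trm F) (f : F) :
    List (Trm F) → Trm F → Trm F → Prop
  | ax : LTyp R Θ sΘ f [] .type .kind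
  | var {Γ A s} : Trm.IsSort s → LTyp R Θ sΘ f Γ A s →
      LTyp R Θ sΘ f (A :: Γ) (.var 0) (Trm.shift A)
  | weak {Γ A s b B} : Trm.IsSort s → LTyp R Θ sΘ f Γ A s → LTyp R Θ sΘ f Γ b B →
      LTyp R Θ sΘ f (A :: Γ) (Trm.shift b) (Trm.shift B)
  | prod {Γ A B s} : Trm.IsSort s → LTyp R Θ sΘ f Γ A .type → LTyp R Θ sΘ f (A :: Γ) B s →
      LTyp R Θ sΘ f Γ (.pi A B) s
  | abs {Γ A b B s} : Trm.IsSort s → LTyp R Θ sΘ f (A :: Γ) b B →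
      LTyp R Θ sΘ f Γ (.pi A B) s → LTyp R Θ sΘ f Γ (.lam A b) (.pi A B)
  | app {Γ t a A B} : LTyp R Θ sΘ f Γ t (.pi A B) → LTyp R Θ sΘ f Γ a A →
      LTyp R Θ sΘ f Γ (.app t a) (Trm.subst1 a B)
  | conv {Γ a A B s} : LTyp R Θ sΘ f Γ a A → Joinable R A B → LTyp R Θ sΘ f Γ B s →
      Trm.IsSort s → LTyp R Θ sΘ f Γ a B
  | symb (g : F) : Prec R Θ f g → Trm.IsSort (sΘ g) → LTyp R Θ sΘ f [] (Θ g) (sΘ g) →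
      LTyp R Θ sΘ f [] (.sym g) (Θ g)

/-- The arguments `y⃗γ = [y₁γ, …, y_jγ]` of an instantiated dependency pair right-hand
side, where `y_j` is de Bruijn variable `0`. -/
def dpArgs {F : Type} (γ : ℕ → Trm F) (j : ℕ) : List (Trm F) :=
  (List.range j).reverse.map γ

/-- The restricted type system `⊢_{f l⃗}` (computability closure): as `Typing`, except that
types are required to be typable using symbols smaller than `f` only, and function symbols
are introduced either as undefined constants or through instances of dependency pairs of
`f l⃗`. -/
inductive RTyp {F : Type} (R : Rules F) (Θ sΘ : F → Trm F) (f : F) (ls : List (Trm F)) :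
    List (Trm F) → Trm F → Trm F → Prop
  | ax : RTyp R Θ sΘ f ls [] .type .kind
  | var {Γ A s} : Trm.IsSort s → LTyp R Θ sΘ f Γ A s →
      RTyp R Θ sΘ f ls (A :: Γ) (.var 0) (Trm.shift A)
  | weak {Γ A s b B} : Trm.IsSort s → LTyp R Θ sΘ f Γ A s → RTyp R Θ sΘ f ls Γ b B →
      RTyp R Θ sΘ f ls (A :: Γ) (Trm.shift b) (Trm.shift B)
  | prod {Γ A B s} : Trm.IsSort s → RTyp R Θ sΘ f ls Γ A .type →
      RTyp R Θ sΘ f ls (A :: Γ) B s → RTyp R Θ sΘ f ls Γ (.pi A B) s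
  | abs {Γ A b B s} : Trm.IsSort s → RTyp R Θ sΘ f ls (A :: Γ) b B →
      LTyp R Θ sΘ f Γ (.pi A B) s → RTyp R Θ sΘ f ls Γ (.lam A b) (.pi A B)
  | app {Γ t a A B s} : Trm.IsSort s → RTyp R Θ sΘ f ls Γ t (.pi A B) →
      RTyp R Θ sΘ f ls Γ a A → LTyp R Θ sΘ f Γ (.pi A B) s →
      RTyp R Θ sΘ f ls Γ (.app t a) (Trm.subst1 a B)
  | conv {Γ a A B s s'} : Trm.IsSort s → Trm.IsSort s' → RTyp R Θ sΘ f ls Γ a A →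
      Joinable R A B → LTyp R Θ sΘ f Γ B s → LTyp R Θ sΘ f Γ A s' →
      RTyp R Θ sΘ f ls Γ a B
  | dp {Γ : List (Trm F)} (g : F) (γ : ℕ → Trm F) (j : ℕ) :
      j ≤ Trm.piArity (Θ g) → Trm.IsSort (sΘ g) → LTyp R Θ sΘ f [] (Θ g) (sΘ g) →
      (∀ i A, (Trm.teleN j (Θ g))[i]? = some A →
        RTyp R Θ sΘ f ls Γ (γ i) (Trm.subst (fun k => γ (k + i + 1)) A)) →
      DepPair R f ls g (dpArgs γ j) →
      RTyp R Θ sΘ f ls Γ (Trm.appList (.sym g) (dpArgs γ j)) (Trm.subst γ (Trm.piCodN j (Θ g)))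
  | const (g : F) : ¬ Defined R g → Trm.IsSort (sΘ g) → LTyp R Θ sΘ f [] (Θ g) (sΘ g) →
      RTyp R Θ sΘ f ls [] (.sym g) (Θ g)

/-- `R` is well-structured (wrt the assignment `Δ` of an environment to every rule):
(a) `≻` is well-founded; (b) `|l⃗| ≤ arit(Θ_f)` for every rule `f l⃗ → r`;
(c) `|m⃗| ≤ arit(Θ_g)` for every dependency pair `f l⃗ > g m⃗`;
(d) `Δ_{f l⃗→r} ⊢_{f l⃗} r : U[x⃗↦l⃗]` for every rule `f l⃗ → r`, where `Θ_f = Πx⃗:T⃗.U`. -/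
def WellStructured {F : Type} (R : Rules F) (Θ sΘ : F → Trm F)
    (Δ : Trm F → Trm F → List (Trm F)) : Prop :=
  WellFounded (fun g f => Prec R Θ f g) ∧
  (∀ l r, (l, r) ∈ R → ∀ (f : F) ls, l = Trm.appList (.sym f) ls →
    ls.length ≤ Trm.piArity (Θ f)) ∧
  (∀ (f : F) ls (g : F) ms, DepPair R f ls g ms → ms.length ≤ Trm.piArity (Θ g)) ∧
  (∀ l r, (l, r) ∈ R → ∀ (f : F) ls, l = Trm.appList (.sym f) ls →
    RTyp R Θ sΘ f ls (Δ l r) r (Trm.subst (mkSubst ls.reverse) (Trm.piCodN ls.length (Θ f))))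

/-- `R` is accessible: for every rule `f l⃗ → r` with `Θ_f = Πx⃗:T⃗.U`, `|x⃗| = |l⃗|`, and
every substitution `σ`, `σ ⊨ Δ_{f l⃗→r}` whenever `⊢ Θ_f : s_f`, `Θ_f ∈ ⟦s_f⟧` and
`[x⃗↦l⃗]σ ⊨ x⃗:T⃗`. -/
def Accessible {F : Type} (R : Rules F) (Θ sΘ : F → Trm F) (I : Interp F)
    (Δ : Trm F → Trm F → List (Trm F)) : Prop :=
  ∀ l r, (l, r) ∈ R → ∀ (f : F) ls, l = Trm.appList (.sym f) ls → ∀ σ : ℕ → Trm F,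
    Typing R Θ sΘ [] (Θ f) (sΘ f) → Θ f ∈ interp R I (sΘ f) Trm.var →
    Models R I (compSubst (mkSubst ls.reverse) σ) (Trm.teleN ls.length (Θ f)) →
    Models R I σ (Δ l r)

/-- A term in `𝕂 ∪ {KIND}`. -/
def IsKindLike {F : Type} (t : Trm F) : Prop := Trm.IsKind t ∨ t = .kind

/-- `R` is plain function-passing (PFP): for every rule `f l⃗ → r` with `Θ_f = Πx⃗:T⃗.U` and
`|x⃗| = |l⃗|`, no `l_i` is a kind or `KIND`, and every `(y : T) ∈ Δ_{f l⃗→r}` satisfies: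
either there is `i` with `y = l_i` and `T = T_i[x⃗↦l⃗]`, or `y ∈ FV(l_i)` and `T = D t⃗`
with `D` undefined and `|t⃗| = arit(Θ_D)`. -/
def PFP {F : Type} (R : Rules F) (Θ : F → Trm F) (Δ : Trm F → Trm F → List (Trm F)) : Prop :=
  ∀ l r, (l, r) ∈ R → ∀ (f : F) ls, l = Trm.appList (.sym f) ls →
    (∀ li ∈ ls, ¬ IsKindLike li) ∧
    (∀ i A, (Δ l r)[i]? = some A →
      (∃ (k : ℕ) (Tk : Trm F), ls[k]? = some (Trm.var i) ∧ (Trm.piDoms (Θ f))[k]? = some Tk ∧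
        Trm.rename (fun j => j + i + 1) A = Trm.subst (mkSubst ((ls.take k).reverse)) Tk) ∨
      ((∃ (k : ℕ) (lk : Trm F), ls[k]? = some lk ∧ i ∈ Trm.FV lk) ∧
        ∃ (D : F) (ts : List (Trm F)), Trm.rename (fun j => j + i + 1) A =
          Trm.appList (.sym D) ts ∧ ¬ Defined R D ∧ ts.length = Trm.piArity (Θ D)))

/-! # Size-change termination -/

/-- Entries of size-change matrices: `−1`, `0` or `∞`. -/
inductive SCTe : Type
  | minusOne : SCTe
  | zero : SCTe
  | infty : SCTe
deriving DecidableEq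

/-- Min-plus multiplication of entries (addition, truncated at `−1`). -/
def SCTe.comp : SCTe → SCTe → SCTe
  | .infty, _ => .infty
  | _, .infty => .infty
  | .minusOne, _ => .minusOne
  | _, .minusOne => .minusOne
  | .zero, .zero => .zero

/-- Minimum of entries (`−1 < 0 < ∞`). -/
def SCTe.min : SCTe → SCTe → SCTe
  | .minusOne, _ => .minusOne
  | _, .minusOne => .minusOne
  | .zero, _ => .zero
  | .infty, x => x

/-- Base of the relation `⊵`: `f t₁…t_n ⊵ t_i` for `f ∈ F`. -/
def ArgSubBase {F : Type} (t u : Trm F) : Prop :=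
  ∃ (f : F) (ts : List (Trm F)), t = Trm.appList (.sym f) ts ∧ u ∈ ts

/-- `⊵`: the smallest transitive relation such that `f t₁…t_n ⊵ t_i` for `f ∈ F`. -/
def ArgGT {F : Type} : Trm F → Trm F → Prop := Relation.TransGen ArgSubBase

open Classical in
/-- The size-change matrix of a dependency pair `f l₁…l_p > g m₁…m_q`:
`a_{ij} = −1` if `l_i ⊵ m_j`, `a_{ij} = 0` if `l_i = m_j`, `a_{ij} = ∞` otherwise
(in particular if `i > p` or `j > q`). -/
noncomputable def dpMatrix {F : Type} (ls ms : List (Trm F)) : ℕ → ℕ → SCTe := fun i j =>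
  match ls[i]?, ms[j]? with
  | some li, some mj =>
      if ArgGT li mj then .minusOne else if li = mj then .zero else .infty
  | _, _ => .infty

/-- Min-plus product of matrices, the middle dimension being `d`. -/
def matComp (d : ℕ) (M N : ℕ → ℕ → SCTe) : ℕ → ℕ → SCTe := fun i j =>
  ((List.range d).map fun k => (M i k).comp (N k j)).foldr SCTe.min .infty

/-- The transitive closure of the call graph of `R`: edges are labeled by the matrices of
the dependency pairs, multiplied in the min-plus semiring along paths. -/
inductive TCEdge {F : Type} (R : Rules F) (Θ : F → Trm F) : F → F → (ℕ → ℕ → SCTe) → Prop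
  | base {f g : F} {ls ms : List (Trm F)} : DepPair R f ls g ms →
      TCEdge R Θ f g (dpMatrix ls ms)
  | comp {f g h : F} {M N : ℕ → ℕ → SCTe} : TCEdge R Θ f g M → TCEdge R Θ g h N →
      TCEdge R Θ f h (matComp (Trm.piArity (Θ g)) M N)

/-- `R` is size-change terminating: in the transitive closure of the call graph, every
idempotent matrix labeling a loop has some `−1` on its diagonal. -/
def SCT {F : Type} (R : Rules F) (Θ : F → Trm F) : Prop :=
  ∀ (f : F) (M : ℕ → ℕ → SCTe), TCEdge R Θ f f M → matComp (Trm.piArity (Θ f)) M M = M →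
    ∃ i < Trm.piArity (Θ f), M i i = SCTe.minusOne
/-- `σ → σ'`: `xσ → xσ'` for exactly one variable `x` and `yσ = yσ'` for all `y ≠ x`. -/
def SubstStep {F : Type} (R : Rules F) (σ σ' : ℕ → Trm F) : Prop :=
  ∃ x : ℕ, Red R (σ x) (σ' x) ∧ ∀ y : ℕ, y ≠ x → σ y = σ' y

/-!
On terms that are neither kinds nor `KIND`, `⟦T⟧σ = ℐ(Tσ)`. As `σ → σ'` entails `Tσ →* Tσ'`, it
suffices that `ℐ` be invariant by reduction on its domain `𝒟`. This holds for any fixpoint `ℐ`,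
since `ℐ(T)` is computed from the normal form of `T`, unique by Newman's lemma when `T` terminates.

On kinds, `⟦T⟧σ` is defined by recursion on `T`, and reducing `σ` also changes the interpretation
of the domains. Typing brings these domains under the first case: the only type of a kind is `KIND`,
because `KIND` is convertible to no typable term, whereas the domain of a typable product has type
`TYPE`.
-/

section AbstractRewriting

open Relation

theorem newman_of_acc {α : Type*} {r : α → α → Prop}
    (hr : ∀ a b c, r a b → r a c → Join (ReflTransGen r) b c) {a : α}
    (ha : Acc (fun x y => r y x) a) {b c : α} (hab : ReflTransGen r a b)
    (hac : ReflTransGen r a c) : Join (ReflTransGen r) b c := by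
  induction ha generalizing b c with
  | intro a _ ih =>
    rcases hab.cases_head with rfl | ⟨b₁, hab₁, hb₁b⟩
    · exact ⟨c, hac, .refl⟩
    rcases hac.cases_head with rfl | ⟨c₁, hac₁, hc₁c⟩
    · exact ⟨b, .refl, hab⟩
    obtain ⟨d, hb₁d, hc₁d⟩ := hr a b₁ c₁ hab₁ hac₁
    obtain ⟨e, hbe, hde⟩ := ih b₁ hab₁ hb₁b hb₁d
    obtain ⟨f, hef, hcf⟩ := ih c₁ hac₁ (hc₁d.trans hde) hc₁c
    exact ⟨f, hbe.trans hef, hcf⟩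

end AbstractRewriting

namespace Trm

variable {F : Type}

theorem upRen_comp (ρ ρ' : ℕ → ℕ) : upRen ρ' ∘ upRen ρ = upRen (ρ' ∘ ρ) := by
  funext n; cases n <;> rfl

theorem rename_rename (t : Trm F) (ρ ρ' : ℕ → ℕ) :
    rename ρ' (rename ρ t) = rename (ρ' ∘ ρ) t := by
  induction t generalizing ρ ρ' <;> simp_all [rename, upRen_comp]

theorem up_comp_upRen (ρ : ℕ → ℕ) (σ : ℕ → Trm F) : up σ ∘ upRen ρ = up (σ ∘ ρ) := by
  funext n; cases n <;> rfl

theorem subst_rename (t : Trm F) (ρ : ℕ → ℕ) (σ : ℕ → Trm F) :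
    subst σ (rename ρ t) = subst (σ ∘ ρ) t := by
  induction t generalizing ρ σ <;> simp_all [rename, subst, up_comp_upRen]

theorem rename_upRen_comp_up (σ : ℕ → Trm F) (ρ : ℕ → ℕ) :
    rename (upRen ρ) ∘ up σ = up (rename ρ ∘ σ) := by
  funext n
  cases n with
  | zero => rfl
  | succ n =>
    simp only [Function.comp, up, rename_rename]
    rfl

theorem rename_subst (t : Trm F) (σ : ℕ → Trm F) (ρ : ℕ → ℕ) :
    rename ρ (subst σ t) = subst (rename ρ ∘ σ) t := by
  induction t generalizing ρ σ <;> simp_all [rename, subst, rename_upRen_comp_up]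

theorem subst_up_comp_up (σ τ : ℕ → Trm F) : subst (up τ) ∘ up σ = up (subst τ ∘ σ) := by
  funext n
  cases n with
  | zero => rfl
  | succ n =>
    simp only [Function.comp, up, rename_subst, subst_rename]
    rfl

theorem subst_subst (t : Trm F) (σ τ : ℕ → Trm F) :
    subst τ (subst σ t) = subst (subst τ ∘ σ) t := by
  induction t generalizing σ τ <;> simp_all [subst, subst_up_comp_up]

theorem up_var : up (var : ℕ → Trm F) = var := by
  funext n; cases n <;> rfl

theorem subst_var (t : Trm F) : subst var t = t := by
  induction t <;> simp_all [subst, up_var]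

theorem subst1_subst_up (a t : Trm F) (σ : ℕ → Trm F) :
    subst1 a (subst (up σ) t) = subst (scons a σ) t := by
  rw [subst1, subst_subst]
  congr 1
  funext n
  cases n with
  | zero => rfl
  | succ n => exact (subst_rename (σ n) _ _).trans (subst_var _)

theorem rename_subst1 (a t : Trm F) (ρ : ℕ → ℕ) :
    rename ρ (subst1 a t) = subst1 (rename ρ a) (rename (upRen ρ) t) := by
  rw [subst1, subst1, rename_subst, subst_rename]
  congr 1
  funext n; cases n <;> rfl

theorem isKind_rename_iff {t : Trm F} {ρ : ℕ → ℕ} : IsKind (rename ρ t) ↔ IsKind t := by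
  induction t generalizing ρ <;> simp_all [rename, IsKind]

theorem rename_eq_kind_iff {t : Trm F} {ρ : ℕ → ℕ} : rename ρ t = kind ↔ t = kind := by
  cases t <;> simp [rename]

theorem subst_appList_ne_kind {σ : ℕ → Trm F} {t : Trm F} (ht : subst σ t ≠ kind)
    (ts : List (Trm F)) : subst σ (appList t ts) ≠ kind := by
  induction ts generalizing t with
  | nil => exact ht
  | cons _ _ ih => exact ih (by simp [subst])

/-- Kinds `Πx₁:A₁. … Πxₙ:Aₙ. TYPE` none of whose domains `Aᵢ` is a kind or `KIND`. Typable kinds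
are of this form, so that `ℐ` alone determines the interpretation of their domains. -/
def IsStratifiedKind : Trm F → Prop
  | .type => True
  | .pi A B => ¬ IsKindLike A ∧ IsStratifiedKind B
  | _ => False

theorem isStratifiedKind_rename_iff {t : Trm F} {ρ : ℕ → ℕ} :
    IsStratifiedKind (rename ρ t) ↔ IsStratifiedKind t := by
  induction t generalizing ρ <;>
    simp_all [rename, IsStratifiedKind, IsKindLike, isKind_rename_iff, rename_eq_kind_iff]

theorem IsStratifiedKind.isKind {t : Trm F} (ht : IsStratifiedKind t) : IsKind t := by
  induction t <;> simp_all [IsStratifiedKind, IsKind]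

end Trm

section Reduction

variable {F : Type} {R : Rules F}

theorem Red.rename {t u : Trm F} (h : Red R t u) (ρ : ℕ → ℕ) :
    Red R (Trm.rename ρ t) (Trm.rename ρ u) := by
  induction h generalizing ρ with
  | beta A b a =>
    rw [Trm.rename_subst1]
    exact .beta _ _ _
  | rule σ hlr =>
    rw [Trm.rename_subst, Trm.rename_subst]
    exact .rule _ hlr
  | appL _ ih => exact .appL (ih ρ)
  | appR _ ih => exact .appR (ih ρ)
  | piL _ ih => exact .piL (ih ρ)
  | piR _ ih => exact .piR (ih _)
  | lamL _ ih => exact .lamL (ih ρ)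
  | lamR _ ih => exact .lamR (ih _)

theorem RedStar.app {t t' u u' : Trm F} (ht : RedStar R t t') (hu : RedStar R u u') :
    RedStar R (.app t u) (.app t' u') :=
  (Relation.ReflTransGen.lift (Trm.app · u) (fun _ _ => Red.appL) _ _ ht).trans
    (Relation.ReflTransGen.lift (Trm.app t') (fun _ _ => Red.appR) _ _ hu)

theorem RedStar.pi {A A' B B' : Trm F} (hA : RedStar R A A') (hB : RedStar R B B') :
    RedStar R (.pi A B) (.pi A' B') :=
  (Relation.ReflTransGen.lift (Trm.pi · B) (fun _ _ => Red.piL) _ _ hA).trans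
    (Relation.ReflTransGen.lift (Trm.pi A') (fun _ _ => Red.piR) _ _ hB)

theorem RedStar.lam {A A' b b' : Trm F} (hA : RedStar R A A') (hb : RedStar R b b') :
    RedStar R (.lam A b) (.lam A' b') :=
  (Relation.ReflTransGen.lift (Trm.lam · b) (fun _ _ => Red.lamL) _ _ hA).trans
    (Relation.ReflTransGen.lift (Trm.lam A') (fun _ _ => Red.lamR) _ _ hb)

theorem redStar_up {σ σ' : ℕ → Trm F} (h : ∀ n, RedStar R (σ n) (σ' n)) (n : ℕ) :
    RedStar R (Trm.up σ n) (Trm.up σ' n) := by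
  cases n with
  | zero => exact .refl
  | succ n => exact Relation.ReflTransGen.lift _ (fun _ _ hr => hr.rename _) _ _ (h n)

theorem redStar_scons {σ σ' : ℕ → Trm F} (h : ∀ n, RedStar R (σ n) (σ' n)) (a : Trm F) (n : ℕ) :
    RedStar R (Trm.scons a σ n) (Trm.scons a σ' n) := by
  cases n with
  | zero => exact .refl
  | succ n => exact h n

theorem redStar_subst (t : Trm F) {σ σ' : ℕ → Trm F} (h : ∀ n, RedStar R (σ n) (σ' n)) :
    RedStar R (Trm.subst σ t) (Trm.subst σ' t) := by
  induction t generalizing σ σ' with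
  | type | kind | sym => exact .refl
  | var n => exact h n
  | pi A B ihA ihB => exact (ihA h).pi (ihB (redStar_up h))
  | app t u iht ihu => exact (iht h).app (ihu h)
  | lam A b ihA ihb => exact (ihA h).lam (ihb (redStar_up h))

theorem SubstStep.redStar {σ σ' : ℕ → Trm F} (h : SubstStep R σ σ') (n : ℕ) :
    RedStar R (σ n) (σ' n) := by
  obtain ⟨x, hx, hne⟩ := h
  obtain rfl | hn := eq_or_ne n x
  · exact .single hx
  · exact hne n hn ▸ .refl

theorem SN.redStar {t u : Trm F} (ht : SN R t) (h : RedStar R t u) : SN R u := by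
  induction h with
  | refl => exact ht
  | tail _ h ih => exact ih.inv h

theorem NormalForm.eq_of_redStar {t u : Trm F} (ht : NormalForm R t) (h : RedStar R t u) :
    u = t :=
  (Relation.reflTransGen_iff_eq ht).1 h

theorem SN.redStar_normalForm (hconf : LocallyConfluent R) {t u v : Trm F} (ht : SN R t)
    (hu : RedStar R t u) (hv : RedStar R t v) (hvn : NormalForm R v) : RedStar R u v := by
  obtain ⟨w, huw, hvw⟩ := newman_of_acc hconf ht hu hv
  rwa [hvn.eq_of_redStar hvw] at huw

theorem SN.normalForm_unique (hconf : LocallyConfluent R) {t u v : Trm F} (ht : SN R t)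
    (hu : RedStar R t u) (hun : NormalForm R u) (hv : RedStar R t v) (hvn : NormalForm R v) :
    v = u :=
  hun.eq_of_redStar (ht.redStar_normalForm hconf hu hv hvn)

theorem IsRewriteSystem.normalForm_kind (hRS : IsRewriteSystem R) : NormalForm R .kind := by
  intro u h
  generalize hk : (Trm.kind : Trm F) = t at h
  cases h with
  | @rule l r σ hlr =>
    obtain ⟨_, f, ls, rfl⟩ : _ ∧ ∃ f ls, l = Trm.appList (.sym f) ls := hRS _ hlr
    exact Trm.subst_appList_ne_kind (by simp [Trm.subst]) ls hk.symm
  | _ => cases hk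

end Reduction

section Typing

variable {F : Type} {R : Rules F} {Θ sΘ : F → Trm F} {Γ : List (Trm F)}

theorem Typing.ne_kind {t T : Trm F} (h : Typing R Θ sΘ Γ t T) : t ≠ .kind := by
  induction h with
  | weak _ _ _ _ ih => exact Trm.rename_eq_kind_iff.not.2 ih
  | conv _ _ _ _ ih => exact ih
  | _ => simp

theorem Typing.redStar (hpres : PresTyping R Θ sΘ) {t u T : Trm F} (h : Typing R Θ sΘ Γ t T)
    (hr : RedStar R t u) : Typing R Θ sΘ Γ u T := by
  induction hr with
  | refl => exact h
  | tail _ hs ih => exact hpres _ _ _ _ ih hs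

theorem Typing.not_joinable_kind (hRS : IsRewriteSystem R) (hpres : PresTyping R Θ sΘ)
    {t T : Trm F} (h : Typing R Θ sΘ Γ t T) : ¬ Joinable R .kind t := by
  rintro ⟨v, hv, htv⟩
  rw [hRS.normalForm_kind.eq_of_redStar hv] at htv
  exact (h.redStar hpres htv).ne_kind rfl

theorem Typing.eq_kind_and_isStratifiedKind (hRS : IsRewriteSystem R)
    (hpres : PresTyping R Θ sΘ) {K T : Trm F} (h : Typing R Θ sΘ Γ K T) (hK : K.IsKind) :
    T = .kind ∧ K.IsStratifiedKind := by
  induction h with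
  | ax => exact ⟨rfl, trivial⟩
  | weak _ _ _ _ ih =>
    obtain ⟨rfl, h⟩ := ih (Trm.isKind_rename_iff.1 hK)
    exact ⟨rfl, Trm.isStratifiedKind_rename_iff.2 h⟩
  | @prod _ A _ _ _ hA _ ihA ihB =>
    obtain ⟨hs, hB⟩ := ihB hK
    have hA_not_kind : ¬ A.IsKind := fun hk => nomatch (ihA hk).1
    exact ⟨hs, not_or.2 ⟨hA_not_kind, hA.ne_kind⟩, hB⟩
  | conv _ hj hB _ ih _ =>
    obtain ⟨rfl, _⟩ := ih hK
    exact (hB.not_joinable_kind hRS hpres hj).elim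
  | _ => exact hK.elim

end Typing

section Interpretation

variable {F : Type} {R : Rules F} {I : Interp F}

theorem mem_domD_of_redStar {T T' : Trm F} (hT : T ∈ domD R I) (h : RedStar R T T') :
    T' ∈ domD R I :=
  ⟨hT.1.redStar h, fun A B hAB => hT.2 A B (h.trans hAB)⟩

theorem interpF_eq_some_piPart (hconf : LocallyConfluent R) {T A B : Trm F} (hT : T ∈ domD R I)
    (hr : RedStar R T (.pi A B)) (hn : NormalForm R (.pi A B)) :
    interpF R I T = .some (piPart I A B) := by
  have h : ∃ A B, RedStar R T (.pi A B) ∧ NormalForm R (.pi A B) := ⟨A, B, hr, hn⟩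
  obtain ⟨hr', hn'⟩ := h.choose_spec.choose_spec
  obtain ⟨hA, hB⟩ := Trm.pi.inj (hT.1.normalForm_unique hconf hr hn hr' hn')
  refine Part.eq_some_iff.2 ⟨hT, ?_⟩
  simp only [interpF, dif_pos h]
  exact congrArg₂ (piPart I) hA hB

theorem interpF_eq_some_SNset {T : Trm F} (hT : T ∈ domD R I)
    (h : ¬ ∃ A B, RedStar R T (.pi A B) ∧ NormalForm R (.pi A B)) :
    interpF R I T = .some (SNset R) :=
  Part.eq_some_iff.2 ⟨hT, dif_neg h⟩

theorem interpF_eq_of_redStar (hconf : LocallyConfluent R) {T T' : Trm F} (hT : T ∈ domD R I)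
    (h : RedStar R T T') : interpF R I T = interpF R I T' := by
  have hT' := mem_domD_of_redStar hT h
  by_cases hpi : ∃ A B, RedStar R T (.pi A B) ∧ NormalForm R (.pi A B)
  · obtain ⟨A, B, hr, hn⟩ := hpi
    rw [interpF_eq_some_piPart hconf hT hr hn,
      interpF_eq_some_piPart hconf hT' (hT.1.redStar_normalForm hconf h hr hn) hn]
  · have hpi' : ¬ ∃ A B, RedStar R T' (.pi A B) ∧ NormalForm R (.pi A B) :=
      fun ⟨A, B, hr, hn⟩ => hpi ⟨A, B, h.trans hr, hn⟩
    rw [interpF_eq_some_SNset hT hpi, interpF_eq_some_SNset hT' hpi']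

theorem dom_iff_mem_domD (hfix : interpF R I = I) {T : Trm F} : (I T).Dom ↔ T ∈ domD R I := by
  conv_lhs => rw [← hfix]
  rfl

theorem fixpoint_eq_of_redStar (hconf : LocallyConfluent R) (hfix : interpF R I = I)
    {T T' : Trm F} (hT : T ∈ domD R I) (h : RedStar R T T') : I T = I T' := by
  simpa only [hfix] using interpF_eq_of_redStar hconf hT h

theorem mem_domD_left_of_pi (hfix : interpF R I = I) {A B : Trm F} (h : .pi A B ∈ domD R I) :
    A ∈ domD R I :=
  (dom_iff_mem_domD hfix).1 (h.2 A B .refl).1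

theorem mem_domD_subst1_of_pi (hfix : interpF R I = I) {A B a : Trm F}
    (h : .pi A B ∈ domD R I) (ha : a ∈ partMem I A) : Trm.subst1 a B ∈ domD R I := by
  obtain ⟨hA, hB⟩ := h.2 A B .refl
  exact (dom_iff_mem_domD hfix).1 (hB _ (Part.get_mem hA) a (ha _ (Part.get_mem hA)))

theorem interp_eq_partMem {T : Trm F} {σ : ℕ → Trm F} (hT : ¬ IsKindLike T)
    (hdom : Trm.subst σ T ∈ domD R I) : interp R I T σ = partMem I (Trm.subst σ T) := by
  cases T <;> simp_all [IsKindLike, Trm.IsKind, interp]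

theorem interp_eq_of_redStar_of_not_isKindLike (hconf : LocallyConfluent R)
    (hfix : interpF R I = I) {T : Trm F} {σ σ' : ℕ → Trm F} (hT : ¬ IsKindLike T)
    (hdom : Trm.subst σ T ∈ domD R I) (hred : ∀ n, RedStar R (σ n) (σ' n)) :
    interp R I T σ = interp R I T σ' := by
  have hTred := redStar_subst T hred
  rw [interp_eq_partMem hT hdom, interp_eq_partMem hT (mem_domD_of_redStar hdom hTred), partMem,
    partMem, fixpoint_eq_of_redStar hconf hfix hdom hTred]

theorem interp_eq_of_redStar_of_isStratifiedKind (hconf : LocallyConfluent R)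
    (hfix : interpF R I = I) {K : Trm F} {σ σ' : ℕ → Trm F} (hK : K.IsStratifiedKind)
    (hdom : Trm.subst σ K ∈ domD R I) (hred : ∀ n, RedStar R (σ n) (σ' n)) :
    interp R I K σ = interp R I K σ' := by
  induction K generalizing σ σ' with
  | type => simp only [interp]
  | pi A B _ ihB =>
    obtain ⟨hA, hB⟩ := hK
    have hAdom : Trm.subst σ A ∈ domD R I := mem_domD_left_of_pi hfix hdom
    have hA_eq : interp R I A σ = interp R I A σ' :=
      interp_eq_of_redStar_of_not_isKindLike hconf hfix hA hAdom hred
    have hB_eq (a) (ha : a ∈ interp R I A σ) :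
        interp R I B (Trm.scons a σ) = interp R I B (Trm.scons a σ') := by
      rw [interp_eq_partMem hA hAdom] at ha
      have hBdom := mem_domD_subst1_of_pi hfix hdom ha
      rw [Trm.subst1_subst_up] at hBdom
      exact ihB hB hBdom (redStar_scons hred a)
    simp only [interp, if_pos hB.isKind, ← hA_eq]
    ext t
    exact forall₂_congr fun a ha => by rw [hB_eq a ha]
  | _ => exact hK.elim

end Interpretation

theorem interp_invariant_subst_red_general {F : Type} {R : Rules F} {Θ sΘ : F → Trm F}
    (hRS : IsRewriteSystem R) (hconf : LocallyConfluent R) (hpres : PresTyping R Θ sΘ)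
    {I : Interp F} (hfix : interpF R I = I) {T : Trm F} {σ σ' : ℕ → Trm F}
    (htyp : ∃ (Γ : List (Trm F)) (U : Trm F), Typing R Θ sΘ Γ T U)
    (hdom : Trm.subst σ T ∈ domD R I) (hred : ∀ n, RedStar R (σ n) (σ' n)) :
    interp R I T σ = interp R I T σ' := by
  obtain ⟨Γ, U, hT⟩ := htyp
  by_cases hk : T.IsKind
  · have hstrat := (hT.eq_kind_and_isStratifiedKind hRS hpres hk).2
    exact interp_eq_of_redStar_of_isStratifiedKind hconf hfix hstrat hdom hred
  · have hkl : ¬ IsKindLike T := not_or.2 ⟨hk, hT.ne_kind⟩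
    exact interp_eq_of_redStar_of_not_isKindLike hconf hfix hkl hdom hred

/-- Lemma 4(c) of the paper. If `T` is typable, `Tσ ∈ 𝒟` and `σ → σ'`,
then `⟦T⟧σ = ⟦T⟧σ'`. -/
theorem interp_invariant_subst_red {F : Type} (R : Rules F) (Θ sΘ : F → Trm F)
    (hRS : IsRewriteSystem R)
    (hconf : LocallyConfluent R)
    (hpres : PresTyping R Θ sΘ)
    (calI : Interp F) (hlfp : IsLfpInterp (interpF R) calI)
    (T : Trm F) (σ σ' : ℕ → Trm F)
    (htyp : ∃ (Γ : List (Trm F)) (U : Trm F), Typing R Θ sΘ Γ T U)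
    (hdom : Trm.subst σ T ∈ domD R calI)
    (hstep : SubstStep R σ σ') :
    interp R calI T σ = interp R calI T σ' := by
  exact interp_invariant_subst_red_general hRS hconf hpres hlfp.1 htyp hdom hstep.redStar
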